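/- Let L/K be an isometric extension of non-Archimedean fields, V a K-vector space of finite dimension d, and N, N' two non-Archimedean norms on V with ground field extensions N_L, N'_L on V_L = L ⊗_K V. Then the relative volume is invariant under ground field extension: vol(N_L, N'_L) = vol(N, N'), where the left-hand side is computed over L-subspaces of V_L and the right-hand side over K-subspaces of V. -/

import Mathlib

open scoped BigOperators

/-- A non-Archimedean norm on a `K`-vector space `V`. -/
def IsNAnorm (K : Type*) {V : Type*} [NormedField K] [AddCommGroup V] [Module K V]
    (N : V → ℝ) : Prop :=
  (∀ v, 0 ≤ N v) ∧ (∀ v, N v = 0 ↔ v = 0) ∧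
  (∀ (a : K) (v : V), N (a • v) = ‖a‖ * N v) ∧
  (∀ v w : V, N (v + w) ≤ max (N v) (N w))

/-- The sup-distance `d_∞` between two norms on `V`. -/
noncomputable def dInfty {V : Type*} [AddCommGroup V] (N N' : V → ℝ) : ℝ :=
  sSup {r | ∃ v : V, v ≠ 0 ∧ r = |Real.log (N' v) - Real.log (N v)|}

/-- The `i`-th relative spectral value `λᵢ(N, N')`:
the supremum, over subspaces `W ⊆ V` with `dim W ≥ i`, of
`inf_{w ∈ W ∖ {0}} (log N'(w) − log N(w))`. -/
noncomputable def specVal (K : Type*) {V : Type*} [Field K] [AddCommGroup V] [Module K V]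
    (N N' : V → ℝ) (i : ℕ) : ℝ :=
  sSup {r | ∃ W : Submodule K V, i ≤ Module.finrank K W ∧
    r = sInf {s | ∃ w ∈ W, w ≠ (0 : V) ∧ s = Real.log (N' w) - Real.log (N w)}}

/-- The relative volume `vol(N, N') = (1/d)·Σ_{i=1}^d λᵢ(N, N')`, where `d = dim V`. -/
noncomputable def relVol (K : Type*) (V : Type*) [Field K] [AddCommGroup V] [Module K V]
    (N N' : V → ℝ) : ℝ :=
  (Module.finrank K V : ℝ)⁻¹ *
    ∑ i ∈ Finset.range (Module.finrank K V), specVal K N N' (i + 1)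

open scoped TensorProduct

/-- The ground field extension of a norm `N` on `V` to `V_L = L ⊗_K V`. -/
noncomputable def groundFieldExt (K : Type*) {L V : Type*} [NormedField K] [NormedField L]
    [Algebra K L] [AddCommGroup V] [Module K V] (N : V → ℝ) (w : L ⊗[K] V) : ℝ :=
  sInf {r | ∃ (n : ℕ) (a : Fin (n + 1) → L) (v : Fin (n + 1) → V),
    w = ∑ j, a j ⊗ₜ[K] v j ∧
    r = Finset.univ.sup' Finset.univ_nonempty fun j => ‖a j‖ * N (v j)}

/-!
A norm with an orthogonal basis is a weighted maximum of coordinates, and its ground field extension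
is the same weighted maximum in the extended basis. If two norms share such a basis, their relative
spectral values are the logarithmic ratios of the weights in decreasing order, so they do not change
under ground field extension.

In general, `N` and `N'` have a common `t`-orthogonal basis for every `t < 1`: a vector almost
maximizing `N' / N` and a functional almost extremal for `N'` at that vector split off a line for
both norms at once. So `N` and `N'` are within `-log t` of norms diagonalized by one basis.
Ground field extension does not increase this distance and spectral values are Lipschitz for it, so
letting `t → 1` reduces everything to the diagonal case.
-/

namespace IsNAnorm

variable {K V : Type*} [NormedField K] [AddCommGroup V] [Module K V] {N : V → ℝ}

lemma nonneg (hN : IsNAnorm K N) (v : V) : 0 ≤ N v := hN.1 v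

lemma eq_zero_iff (hN : IsNAnorm K N) {v : V} : N v = 0 ↔ v = 0 := hN.2.1 v

protected lemma map_smul (hN : IsNAnorm K N) (a : K) (v : V) : N (a • v) = ‖a‖ * N v :=
  hN.2.2.1 a v

lemma isNonarchimedean (hN : IsNAnorm K N) : IsNonarchimedean N := hN.2.2.2

protected lemma map_zero (hN : IsNAnorm K N) : N 0 = 0 := hN.eq_zero_iff.2 rfl

lemma pos (hN : IsNAnorm K N) {v : V} (hv : v ≠ 0) : 0 < N v :=
  (hN.nonneg v).lt_of_ne' (mt hN.eq_zero_iff.1 hv)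

protected lemma map_neg (hN : IsNAnorm K N) (v : V) : N (-v) = N v := by
  simpa using hN.map_smul (-1) v

lemma map_sub_le_max (hN : IsNAnorm K N) (v w : V) : N (v - w) ≤ max (N v) (N w) := by
  simpa only [sub_eq_add_neg, hN.map_neg] using hN.isNonarchimedean v (-w)

lemma restrict (hN : IsNAnorm K N) (W : Submodule K V) : IsNAnorm K fun w : W => N w :=
  ⟨fun w => hN.nonneg w, fun w => hN.eq_zero_iff.trans (by simp),
    fun a w => hN.map_smul a w, fun w w' => hN.isNonarchimedean w w'⟩

/-- The normed group structure on `V` defined by a non-Archimedean norm, which gives access to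
Mathlib's metric theory. -/
abbrev toNormedAddCommGroup (hN : IsNAnorm K N) : NormedAddCommGroup V :=
  AddGroupNorm.toNormedAddCommGroup
    { toFun := N
      map_zero' := hN.map_zero
      neg' := hN.map_neg
      add_le' := fun _ _ => hN.isNonarchimedean.add_le hN.nonneg
      eq_zero_of_map_eq_zero' := fun _ => hN.eq_zero_iff.1 }

/-- The normed space structure on `V` defined by a non-Archimedean norm. -/
abbrev toNormedSpace (hN : IsNAnorm K N) :
    letI := hN.toNormedAddCommGroup
    NormedSpace K V :=
  letI := hN.toNormedAddCommGroup
  { norm_smul_le := fun a v => (hN.map_smul a v).le }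

end IsNAnorm

lemma isClosed_span_range_of_norm_le {K V ι : Type*} [NormedField K] [CompleteSpace K]
    [NormedAddCommGroup V] [NormedSpace K V] [Fintype ι] {e : ι → V} {C : NNReal}
    (h : ∀ a : ι → K, ‖a‖ ≤ C * ‖∑ i, a i • e i‖) :
    IsClosed (Submodule.span K (Set.range e) : Set V) := by
  have hanti : AntilipschitzWith C (Fintype.linearCombination K e) :=
    AddMonoidHomClass.antilipschitz_of_bound _ h
  have hcont : Continuous (Fintype.linearCombination K e) := LinearMap.continuous_on_pi _
  rw [← Fintype.range_linearCombination, LinearMap.coe_range]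
  exact hanti.isClosed_range (uniformContinuous_of_continuousAt_zero _ hcont.continuousAt)

/-- A finite family `e` is `t`-orthogonal for `N` if every term of a linear combination of `e` is
controlled, up to the factor `t`, by the whole combination; for `t = 1` and a non-Archimedean norm
this says `N (∑ aᵢ eᵢ) = maxᵢ N (aᵢ eᵢ)`. -/
def IsTOrthogonal (K : Type*) {V ι : Type*} [NormedField K] [AddCommGroup V] [Module K V]
    [Fintype ι] (N : V → ℝ) (t : ℝ) (e : ι → V) : Prop :=
  ∀ (a : ι → K) (j : ι), t * N (a j • e j) ≤ N (∑ i, a i • e i)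

section Orthogonal

variable {K V ι : Type*} [NormedField K] [AddCommGroup V] [Module K V] [Fintype ι]
  {N : V → ℝ} {s t : ℝ}

lemma IsNAnorm.mul_map_smul_le_map_smul_add (hN : IsNAnorm K N) {W : Submodule K V} {y : V}
    (hy : ∀ w ∈ W, s * N y ≤ N (y - w)) (c : K) {w : V} (hw : w ∈ W) :
    s * N (c • y) ≤ N (c • y + w) := by
  rcases eq_or_ne c 0 with rfl | hc
  · simpa [hN.map_zero] using hN.nonneg w
  · have hsplit : c • y + w = c • (y - -(c⁻¹ • w)) := by simp [hc]
    rw [hsplit, hN.map_smul, hN.map_smul, mul_left_comm]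
    gcongr
    exact hy _ (W.neg_mem (W.smul_mem _ hw))

lemma IsTOrthogonal.cons (hN : IsNAnorm K N) {n : ℕ} {e : Fin n → V} (ho : IsTOrthogonal K N t e)
    (hs : 0 ≤ s) (hs1 : s ≤ 1) (ht1 : t ≤ 1) {y : V}
    (hy : ∀ w ∈ Submodule.span K (Set.range e), s * N y ≤ N (y - w)) :
    IsTOrthogonal K N (s * t) (Fin.cons y e : Fin (n + 1) → V) := by
  intro a
  rw [Fin.sum_univ_succ]
  simp only [Fin.cons_zero, Fin.cons_succ]
  set u := ∑ i : Fin n, a i.succ • e i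
  have hhead : s * N (a 0 • y) ≤ N (a 0 • y + u) := hN.mul_map_smul_le_map_smul_add hy _
    ((Submodule.mem_span_range_iff_exists_fun K).2 ⟨_, rfl⟩)
  have htail : s * N u ≤ N (a 0 • y + u) :=
    calc s * N u = s * N ((a 0 • y + u) - a 0 • y) := by rw [add_sub_cancel_left]
      _ ≤ s * max (N (a 0 • y + u)) (N (a 0 • y)) := by gcongr; exact hN.map_sub_le_max _ _
      _ = max (s * N (a 0 • y + u)) (s * N (a 0 • y)) := mul_max_of_nonneg _ _ hs
      _ ≤ N (a 0 • y + u) := max_le (mul_le_of_le_one_left (hN.nonneg _) hs1) hhead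
  refine Fin.cases ?_ fun j => ?_
  · calc s * t * N (a 0 • y) ≤ s * 1 * N (a 0 • y) := by
          gcongr
          exact hN.nonneg _
      _ ≤ N (a 0 • y + u) := by rwa [mul_one]
  · calc s * t * N (a j.succ • e j) = s * (t * N (a j.succ • e j)) := mul_assoc ..
      _ ≤ s * N u := by gcongr; exact ho (fun i => a i.succ) j
      _ ≤ N (a 0 • y + u) := htail

lemma IsTOrthogonal.reindex {κ : Type*} [Fintype κ] {e : ι → V} (ho : IsTOrthogonal K N t e)
    (σ : κ ≃ ι) : IsTOrthogonal K N t (e ∘ σ) := by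
  intro a j
  have h := ho (a ∘ σ.symm) (σ j)
  rw [← Equiv.sum_comp σ] at h
  simpa using h

lemma IsTOrthogonal.exists_norm_le (hN : IsNAnorm K N) (ht : 0 < t) {e : ι → V}
    (he : ∀ i, e i ≠ 0) (ho : IsTOrthogonal K N t e) :
    ∃ C : NNReal, ∀ a : ι → K, ‖a‖ ≤ C * N (∑ i, a i • e i) := by
  obtain ⟨C, hC⟩ := (Set.finite_range fun i => (t * N (e i))⁻¹.toNNReal).bddAbove
  refine ⟨C, fun a => (pi_norm_le_iff_of_nonneg (mul_nonneg C.2 (hN.nonneg _))).2 fun i => ?_⟩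
  calc ‖a i‖ = (t * N (e i))⁻¹ * (t * N (a i • e i)) := by
        have hpos := hN.pos (he i)
        rw [hN.map_smul]
        field_simp
    _ ≤ C * N (∑ i, a i • e i) := by
        gcongr
        · exact mul_nonneg ht.le (hN.nonneg _)
        · exact Real.toNNReal_le_iff_le_coe.1 (hC ⟨i, rfl⟩)
        · exact ho a i

lemma IsTOrthogonal.exists_notMem_span [CompleteSpace K] (hN : IsNAnorm K N) (ht : 0 < t)
    {e : ι → V} (he : ∀ i, e i ≠ 0) (ho : IsTOrthogonal K N t e)
    (hspan : Submodule.span K (Set.range e) ≠ ⊤) (hs : s < 1) :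
    ∃ y ∉ Submodule.span K (Set.range e),
      ∀ w ∈ Submodule.span K (Set.range e), s * N y ≤ N (y - w) := by
  let _ := hN.toNormedAddCommGroup
  let _ := hN.toNormedSpace
  obtain ⟨C, hC⟩ := ho.exists_norm_le hN ht he
  have hclosed : IsClosed (Submodule.span K (Set.range e) : Set V) :=
    isClosed_span_range_of_norm_le hC
  exact riesz_lemma hclosed (by simpa [Submodule.eq_top_iff'] using hspan) hs

end Orthogonal

lemma exists_lt_one_mul_self_eq {t : ℝ} (ht : 0 < t) (ht1 : t < 1) :
    ∃ s, 0 < s ∧ s < 1 ∧ s * s = t :=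
  ⟨√t, Real.sqrt_pos.2 ht, (Real.sqrt_lt' one_pos).2 (by simpa using ht1), Real.mul_self_sqrt ht.le⟩

section Existence

variable {K V : Type*} [NormedField K] [AddCommGroup V] [Module K V] {N : V → ℝ} {t : ℝ}

lemma IsNAnorm.exists_linearIndependent_isTOrthogonal [CompleteSpace K] (hN : IsNAnorm K N)
    {v : V} (hv : v ≠ 0) {k : ℕ} (hk : k + 1 ≤ Module.finrank K V) (ht : 0 < t) (ht1 : t < 1) :
    ∃ e : Fin (k + 1) → V,
      LinearIndependent K e ∧ v ∈ Set.range e ∧ IsTOrthogonal K N t e := by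
  induction k generalizing t with
  | zero =>
    have : Subsingleton (Fin (0 + 1)) := inferInstanceAs (Subsingleton (Fin 1))
    refine ⟨fun _ => v, LinearIndependent.of_subsingleton 0 hv, ⟨0, rfl⟩, fun a j => ?_⟩
    simpa [Fin.fin_one_eq_zero j] using mul_le_of_le_one_left (hN.nonneg (a 0 • v)) ht1.le
  | succ k ih =>
    obtain ⟨s, hs, hs1, rfl⟩ := exists_lt_one_mul_self_eq ht ht1
    obtain ⟨e, hli, ⟨i, hi⟩, ho⟩ := ih (by omega) hs hs1
    have hspan : Submodule.span K (Set.range e) ≠ ⊤ := by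
      intro htop
      have hcard := finrank_span_eq_card hli
      rw [htop, finrank_top, Fintype.card_fin] at hcard
      omega
    obtain ⟨y, hy, hdist⟩ := ho.exists_notMem_span hN hs hli.ne_zero hspan hs1
    refine ⟨Fin.cons y e, linearIndependent_finCons.2 ⟨hli, hy⟩, ⟨i.succ, by simpa using hi⟩, ?_⟩
    exact ho.cons hN hs.le hs1.le hs1.le hdist

lemma IsNAnorm.exists_basis_isTOrthogonal [CompleteSpace K] [FiniteDimensional K V]
    (hN : IsNAnorm K N) {v : V} (hv : v ≠ 0) (ht : 0 < t) (ht1 : t < 1) :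
    ∃ b : Module.Basis (Fin (Module.finrank K V)) K V,
      v ∈ Set.range b ∧ IsTOrthogonal K N t b := by
  obtain ⟨k, hk⟩ := Nat.exists_eq_succ_of_ne_zero
    (Module.finrank_pos_iff_exists_ne_zero.2 ⟨v, hv⟩ : 0 < Module.finrank K V).ne'
  obtain ⟨e, hli, hve, ho⟩ := hN.exists_linearIndependent_isTOrthogonal hv hk.ge ht ht1
  rw [hk]
  refine ⟨basisOfLinearIndependentOfCardEqFinrank hli (by simp [hk]), ?_⟩
  rw [coe_basisOfLinearIndependentOfCardEqFinrank]
  exact ⟨hve, ho⟩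

lemma IsTOrthogonal.mul_map_repr_smul_le {ι : Type*} [Fintype ι] {b : Module.Basis ι K V}
    (ho : IsTOrthogonal K N t b) (v : V) (j : ι) : t * N (b.repr v j • b j) ≤ N v := by
  simpa only [b.sum_repr] using ho (b.repr v) j

lemma IsNAnorm.exists_dual_eq_one [CompleteSpace K] [FiniteDimensional K V]
    (hN : IsNAnorm K N) {v : V} (hv : v ≠ 0) (ht : 0 < t) (ht1 : t < 1) :
    ∃ f : Module.Dual K V, f v = 1 ∧ ∀ w, t * N (f w • v) ≤ N w := by
  obtain ⟨b, ⟨i, rfl⟩, ho⟩ := hN.exists_basis_isTOrthogonal hv ht ht1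
  exact ⟨b.coord i, by simp, fun w => ho.mul_map_repr_smul_le w i⟩

end Existence

/-- The norm `∑ vⱼ bⱼ ↦ maxⱼ |vⱼ| rⱼ` diagonalized by the basis `b`, with values `r` on it. As a
real supremum, it is `0` on the zero space. -/
noncomputable def diagNorm {K V ι : Type*} [NormedField K] [AddCommGroup V] [Module K V]
    (b : Module.Basis ι K V) (r : ι → ℝ) (v : V) : ℝ :=
  ⨆ j, ‖b.repr v j‖ * r j

section DiagNorm

variable {K V ι : Type*} [NormedField K] [AddCommGroup V] [Module K V]
  {b : Module.Basis ι K V} {r r' : ι → ℝ} {v : V}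

lemma diagNorm_le {s : ℝ} (h : ∀ j, ‖b.repr v j‖ * r j ≤ s) (hs : 0 ≤ s) : diagNorm b r v ≤ s :=
  Real.iSup_le h hs

lemma diagNorm_nonneg (hr : ∀ j, 0 ≤ r j) (v : V) : 0 ≤ diagNorm b r v :=
  Real.iSup_nonneg fun j => mul_nonneg (norm_nonneg _) (hr j)

variable [Finite ι]

lemma norm_repr_mul_le_diagNorm (b : Module.Basis ι K V) (r : ι → ℝ) (v : V) (j : ι) :
    ‖b.repr v j‖ * r j ≤ diagNorm b r v :=
  le_ciSup (f := fun j => ‖b.repr v j‖ * r j) (Set.finite_range _).bddAbove j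

lemma diagNorm_pos (hr : ∀ j, 0 < r j) (hv : v ≠ 0) : 0 < diagNorm b r v := by
  obtain ⟨j, hj⟩ := Finsupp.ne_iff.1 (b.repr.map_eq_zero_iff.not.2 hv)
  exact (mul_pos (norm_pos_iff.2 hj) (hr j)).trans_le (norm_repr_mul_le_diagNorm b r v j)

lemma diagNorm_le_mul_diagNorm {B : ℝ} (hB : 0 ≤ B) (hr' : ∀ j, 0 ≤ r' j)
    (h : ∀ j, b.repr v j ≠ 0 → r j ≤ B * r' j) : diagNorm b r v ≤ B * diagNorm b r' v := by
  have hnonneg : 0 ≤ B * diagNorm b r' v := mul_nonneg hB (diagNorm_nonneg hr' v)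
  refine diagNorm_le (fun j => ?_) hnonneg
  rcases eq_or_ne (b.repr v j) 0 with hj | hj
  · simpa [hj] using hnonneg
  · calc ‖b.repr v j‖ * r j ≤ ‖b.repr v j‖ * (B * r' j) := by gcongr; exact h j hj
      _ = B * (‖b.repr v j‖ * r' j) := mul_left_comm ..
      _ ≤ B * diagNorm b r' v := by gcongr; exact norm_repr_mul_le_diagNorm b r' v j

lemma diagNorm_apply_basis (hr : ∀ j, 0 ≤ r j) (j : ι) : diagNorm b r (b j) = r j := by
  classical
  refine le_antisymm (diagNorm_le (fun k => ?_) (hr j)) ?_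
  · rcases eq_or_ne j k with rfl | hjk
    · simp
    · simpa [Finsupp.single_apply, hjk] using hr j
  · simpa using norm_repr_mul_le_diagNorm b r (b j) j

lemma le_log_diagNorm_sub_log_diagNorm (hr : ∀ j, 0 < r j) (hr' : ∀ j, 0 < r' j) (hv : v ≠ 0)
    {m : ℝ} (h : ∀ j, b.repr v j ≠ 0 → m ≤ Real.log (r' j) - Real.log (r j)) :
    m ≤ Real.log (diagNorm b r' v) - Real.log (diagNorm b r v) := by
  have hle : diagNorm b r v ≤ Real.exp (-m) * diagNorm b r' v := by
    refine diagNorm_le_mul_diagNorm (Real.exp_pos _).le (fun j => (hr' j).le) fun j hj => ?_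
    rw [← Real.log_le_log_iff (hr j) (mul_pos (Real.exp_pos _) (hr' j)),
      Real.log_mul (Real.exp_ne_zero _) (hr' j).ne', Real.log_exp]
    linarith [h j hj]
  have hlog := Real.log_le_log (diagNorm_pos hr hv) hle
  rw [Real.log_mul (Real.exp_ne_zero _) (diagNorm_pos hr' hv).ne', Real.log_exp] at hlog
  linarith

lemma log_diagNorm_sub_log_diagNorm_le (hr : ∀ j, 0 < r j) (hr' : ∀ j, 0 < r' j) (hv : v ≠ 0)
    {m : ℝ} (h : ∀ j, b.repr v j ≠ 0 → Real.log (r' j) - Real.log (r j) ≤ m) :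
    Real.log (diagNorm b r' v) - Real.log (diagNorm b r v) ≤ m := by
  have := le_log_diagNorm_sub_log_diagNorm hr' hr hv (m := -m) fun j hj => by linarith [h j hj]
  linarith

lemma exists_abs_log_diagNorm_sub_log_diagNorm_le (b : Module.Basis ι K V) (hr : ∀ j, 0 < r j)
    (hr' : ∀ j, 0 < r' j) :
    ∃ B, 0 ≤ B ∧
      ∀ v ≠ 0, |Real.log (diagNorm b r' v) - Real.log (diagNorm b r v)| ≤ B := by
  obtain ⟨B, hB⟩ := (Set.finite_range fun j => |Real.log (r' j) - Real.log (r j)|).bddAbove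
  have hB' (j : ι) : |Real.log (r' j) - Real.log (r j)| ≤ |B| :=
    (hB (Set.mem_range_self j)).trans (le_abs_self B)
  exact ⟨|B|, abs_nonneg B, fun v hv => abs_le.2
    ⟨le_log_diagNorm_sub_log_diagNorm hr hr' hv fun j _ => (abs_le.1 (hB' j)).1,
      log_diagNorm_sub_log_diagNorm_le hr hr' hv fun j _ => (abs_le.1 (hB' j)).2⟩⟩

end DiagNorm

section Joint

variable {K V : Type*} [NormedField K] [AddCommGroup V] [Module K V] {N N' : V → ℝ} {t : ℝ}

lemma IsNAnorm.le_diagNorm {ι : Type*} [Finite ι] (hN : IsNAnorm K N) (b : Module.Basis ι K V)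
    (v : V) : N v ≤ diagNorm b (N ∘ b) v := by
  have := Fintype.ofFinite ι
  rcases isEmpty_or_nonempty ι
  · rw [← b.sum_repr v, Finset.univ_eq_empty, Finset.sum_empty, hN.map_zero]
    exact diagNorm_nonneg (fun j => hN.nonneg (b j)) 0
  · obtain ⟨j, -, hj⟩ := hN.isNonarchimedean.finset_image_add_of_nonempty
      (fun j => b.repr v j • b j) Finset.univ_nonempty
    rw [b.sum_repr, hN.map_smul] at hj
    exact hj.trans (norm_repr_mul_le_diagNorm b (N ∘ b) v j)

lemma IsTOrthogonal.mul_diagNorm_le {ι : Type*} [Fintype ι] {b : Module.Basis ι K V}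
    (ho : IsTOrthogonal K N t b) (hN : IsNAnorm K N) (ht : 0 ≤ t) (v : V) :
    t * diagNorm b (N ∘ b) v ≤ N v := by
  rw [diagNorm, Real.mul_iSup_of_nonneg ht]
  refine Real.iSup_le (fun j => ?_) (hN.nonneg v)
  simpa only [hN.map_smul, Function.comp_apply] using ho.mul_map_repr_smul_le v j

lemma IsTOrthogonal.cons_ker {s : ℝ} (hN : IsNAnorm K N) {f : Module.Dual K V} {v : V}
    (hfv : f v = 1) (hs : 0 ≤ s) (hs1 : s ≤ 1) (hf : ∀ w, s * N (f w • v) ≤ N w) {n : ℕ}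
    {e : Fin n → LinearMap.ker f} (ht1 : t ≤ 1)
    (ho : IsTOrthogonal K (fun w : LinearMap.ker f => N w) t e) :
    IsTOrthogonal K N (s * t) (Fin.cons v ((↑) ∘ e) : Fin (n + 1) → V) := by
  have ho' : IsTOrthogonal K N t ((↑) ∘ e : Fin n → V) := fun a j => by simpa using ho a j
  refine ho'.cons hN hs hs1 ht1 fun w hw => ?_
  have hfw : f w = 0 :=
    (Submodule.span_le.2 (by rintro _ ⟨i, rfl⟩; exact (e i).2) : _ ≤ LinearMap.ker f) hw
  simpa [hfv, hfw] using hf (v - w)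

variable [CompleteSpace K] [FiniteDimensional K V]

lemma IsNAnorm.exists_le_mul (hN : IsNAnorm K N) (hN' : IsNAnorm K N') :
    ∃ B, ∀ v, N' v ≤ B * N v := by
  rcases subsingleton_or_nontrivial V
  · exact ⟨1, fun v => by simp [Subsingleton.elim v 0, hN.map_zero, hN'.map_zero]⟩
  obtain ⟨v, hv⟩ := exists_ne (0 : V)
  obtain ⟨b, -, ho⟩ := hN.exists_basis_isTOrthogonal hv (t := 1 / 2) (by norm_num) (by norm_num)
  obtain ⟨B, hB⟩ := (Set.finite_range fun j => N' (b j) / N (b j)).bddAbove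
  refine ⟨|B| * 2, fun v => ?_⟩
  calc N' v ≤ diagNorm b (N' ∘ b) v := hN'.le_diagNorm b v
    _ ≤ |B| * diagNorm b (N ∘ b) v :=
        diagNorm_le_mul_diagNorm (abs_nonneg B) (fun j => hN.nonneg (b j)) fun j _ =>
          (div_le_iff₀ (hN.pos (b.ne_zero j))).1
            ((hB (Set.mem_range_self j)).trans (le_abs_self B))
    _ ≤ |B| * (2 * N v) := by
        gcongr
        linarith [ho.mul_diagNorm_le hN one_half_pos.le v]
    _ = |B| * 2 * N v := (mul_assoc ..).symm

lemma IsNAnorm.exists_almost_max_ratio [Nontrivial V] (hN : IsNAnorm K N) (hN' : IsNAnorm K N')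
    (ht : 0 < t) (ht1 : t < 1) :
    ∃ v : V, v ≠ 0 ∧ ∀ w, t * (N' w * N v) ≤ N' v * N w := by
  obtain ⟨B, hB⟩ := hN.exists_le_mul hN'
  let ratio (w : {w : V // w ≠ 0}) : ℝ := N' w / N w
  have hbdd : BddAbove (Set.range ratio) := ⟨B, by
    rintro _ ⟨⟨w, hw⟩, rfl⟩
    exact (div_le_iff₀ (hN.pos hw)).2 (hB w)⟩
  obtain ⟨v₀, hv₀⟩ := exists_ne (0 : V)
  have : Nonempty {w : V // w ≠ 0} := ⟨⟨v₀, hv₀⟩⟩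
  have hpos : 0 < ⨆ w, ratio w :=
    (div_pos (hN'.pos hv₀) (hN.pos hv₀)).trans_le (le_ciSup hbdd ⟨v₀, hv₀⟩)
  obtain ⟨⟨v, hv⟩, hlt⟩ := exists_lt_of_lt_ciSup (mul_lt_of_lt_one_left hpos ht1)
  refine ⟨v, hv, fun w => ?_⟩
  rcases eq_or_ne w 0 with rfl | hw
  · simp [hN.map_zero, hN'.map_zero]
  have hratio : t * (N' w / N w) ≤ N' v / N v :=
    (mul_le_mul_of_nonneg_left (le_ciSup hbdd ⟨w, hw⟩) ht.le).trans hlt.le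
  rwa [← mul_div_assoc, div_le_div_iff₀ (hN.pos hw) (hN.pos hv), mul_assoc] at hratio

/-- If `v` almost maximizes `N' / N`, then a functional that is almost extremal for `N'` at `v` is
so for `N` too. -/
lemma IsNAnorm.exists_common_dual [Nontrivial V] (hN : IsNAnorm K N) (hN' : IsNAnorm K N')
    (ht : 0 < t) (ht1 : t < 1) :
    ∃ (v : V) (f : Module.Dual K V), f v = 1 ∧
      (∀ w, t * N (f w • v) ≤ N w) ∧ ∀ w, t * N' (f w • v) ≤ N' w := by
  obtain ⟨s, hs, hs1, rfl⟩ := exists_lt_one_mul_self_eq ht ht1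
  obtain ⟨v, hv, hmax⟩ := hN.exists_almost_max_ratio hN' hs hs1
  obtain ⟨f, hfv, hf⟩ := hN'.exists_dual_eq_one hv hs hs1
  refine ⟨v, f, hfv, fun w => le_of_mul_le_mul_left ?_ (hN'.pos hv), fun w => ?_⟩
  · calc N' v * (s * s * N (f w • v)) = s * (s * N' (f w • v) * N v) := by
          rw [hN.map_smul, hN'.map_smul]
          ring
      _ ≤ s * (N' w * N v) := by
          have := hN.nonneg v
          gcongr
          exact hf w
      _ ≤ N' v * N w := hmax w
  · exact (mul_le_mul_of_nonneg_right (mul_le_of_le_one_left hs.le hs1.le)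
      (hN'.nonneg _)).trans (hf w)

lemma IsNAnorm.exists_basis_isTOrthogonal_isTOrthogonal (hN : IsNAnorm K N)
    (hN' : IsNAnorm K N') (ht : 0 < t) (ht1 : t < 1) :
    ∃ b : Module.Basis (Fin (Module.finrank K V)) K V,
      IsTOrthogonal K N t b ∧ IsTOrthogonal K N' t b := by
  induction hn : Module.finrank K V generalizing V t with
  | zero =>
    exact ⟨Module.finBasisOfFinrankEq K V hn, fun _ j => j.elim0, fun _ j => j.elim0⟩
  | succ n ih =>
    have : Nontrivial V := Module.nontrivial_of_finrank_pos (R := K) (by omega)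
    obtain ⟨s, hs, hs1, rfl⟩ := exists_lt_one_mul_self_eq ht ht1
    obtain ⟨v, f, hfv, hf, hf'⟩ := hN.exists_common_dual hN' hs hs1
    have hker : Module.finrank K (LinearMap.ker f) = n := by
      have := Module.Dual.finrank_ker_add_one_of_ne_zero (f := f) (by rintro rfl; simp at hfv)
      omega
    obtain ⟨b, ho, ho'⟩ := ih (hN.restrict _) (hN'.restrict _) hs hs1 hker
    refine ⟨b.mkFinCons v (fun c x hx h => ?_) fun z => ⟨-f z, by simp [hfv]⟩, ?_⟩
    · simpa [hfv, LinearMap.mem_ker.1 hx] using congrArg f h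
    · rw [Module.Basis.coe_mkFinCons]
      exact ⟨.cons_ker hN hfv hs.le hs1.le hf hs1.le ho,
        .cons_ker hN' hfv hs.le hs1.le hf' hs1.le ho'⟩

lemma IsNAnorm.exists_basis_isTOrthogonal_antitone (hN : IsNAnorm K N) (hN' : IsNAnorm K N')
    (ht : 0 < t) (ht1 : t < 1) :
    ∃ b : Module.Basis (Fin (Module.finrank K V)) K V,
      IsTOrthogonal K N t b ∧ IsTOrthogonal K N' t b ∧
        Antitone fun j => Real.log (N' (b j)) - Real.log (N (b j)) := by
  obtain ⟨b, ho, ho'⟩ := hN.exists_basis_isTOrthogonal_isTOrthogonal hN' ht ht1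
  let σ := Tuple.sort fun j => OrderDual.toDual (Real.log (N' (b j)) - Real.log (N (b j)))
  have hσ : ⇑(b.reindex σ.symm) = b ∘ σ := by ext; simp
  refine ⟨b.reindex σ.symm, ?_⟩
  rw [hσ]
  exact ⟨ho.reindex σ, ho'.reindex σ, fun i j hij => Tuple.monotone_sort
    (fun j => OrderDual.toDual (Real.log (N' (b j)) - Real.log (N (b j)))) hij⟩

end Joint

section Spectral

lemma abs_iInf_sub_iInf_le {ι : Sort*} {f g : ι → ℝ} {ε : ℝ} (hε : 0 ≤ ε)
    (hg : BddBelow (Set.range g)) (h : ∀ i, |f i - g i| ≤ ε) :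
    |(⨅ i, f i) - ⨅ i, g i| ≤ ε := by
  rcases isEmpty_or_nonempty ι
  · simpa [Real.iInf_of_isEmpty] using hε
  obtain ⟨m, hm⟩ := hg
  have hf : BddBelow (Set.range f) := ⟨m - ε, by
    rintro _ ⟨i, rfl⟩
    linarith [hm (Set.mem_range_self i), (abs_le.1 (h i)).1]⟩
  have hfg : (⨅ i, f i) - ε ≤ ⨅ i, g i :=
    le_ciInf fun i => by linarith [ciInf_le hf i, (abs_le.1 (h i)).2]
  have hgf : (⨅ i, g i) - ε ≤ ⨅ i, f i :=
    le_ciInf fun i => by linarith [ciInf_le ⟨m, hm⟩ i, (abs_le.1 (h i)).1]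
  exact abs_sub_le_iff.2 ⟨sub_le_comm.1 hfg, sub_le_comm.1 hgf⟩

lemma abs_iSup_sub_iSup_le {ι : Sort*} {f g : ι → ℝ} {ε : ℝ} (hε : 0 ≤ ε)
    (hg : BddAbove (Set.range g)) (h : ∀ i, |f i - g i| ≤ ε) :
    |(⨆ i, f i) - ⨆ i, g i| ≤ ε := by
  rcases isEmpty_or_nonempty ι
  · simpa [Real.iSup_of_isEmpty] using hε
  obtain ⟨m, hm⟩ := hg
  have hf : BddAbove (Set.range f) := ⟨m + ε, by
    rintro _ ⟨i, rfl⟩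
    linarith [hm (Set.mem_range_self i), (abs_le.1 (h i)).2]⟩
  have hfg : ⨆ i, f i ≤ ε + ⨆ i, g i :=
    ciSup_le fun i => by linarith [le_ciSup ⟨m, hm⟩ i, (abs_le.1 (h i)).2]
  have hgf : ⨆ i, g i ≤ ε + ⨆ i, f i :=
    ciSup_le fun i => by linarith [le_ciSup hf i, (abs_le.1 (h i)).1]
  exact abs_sub_le_iff.2 ⟨sub_le_iff_le_add.2 hfg, sub_le_iff_le_add.2 hgf⟩

lemma abs_iInf_le {ι : Sort*} {f : ι → ℝ} {B : ℝ} (hB : 0 ≤ B) (h : ∀ i, |f i| ≤ B) :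
    |⨅ i, f i| ≤ B := by
  simpa using abs_iInf_sub_iInf_le (g := fun _ => 0) hB
    ⟨0, by rintro _ ⟨_, rfl⟩; exact le_rfl⟩ (by simpa using h)

lemma specVal_eq_iSup_iInf (K : Type*) {V : Type*} [Field K] [AddCommGroup V] [Module K V]
    (N N' : V → ℝ) (i : ℕ) :
    specVal K N N' i = ⨆ W : {W : Submodule K V // i ≤ Module.finrank K W},
      ⨅ w : {w : V // w ∈ W.1 ∧ w ≠ 0}, (Real.log (N' w) - Real.log (N w)) := by
  simp only [specVal, iSup, iInf, Set.range, Subtype.exists, exists_prop, and_assoc, eq_comm]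

variable {K V : Type*} [Field K] [AddCommGroup V] [Module K V] {N N' M M' : V → ℝ} {B c : ℝ}
  {i : ℕ}

lemma bddBelow_range_log_sub_log (hB : ∀ v ≠ 0, |Real.log (N' v) - Real.log (N v)| ≤ B)
    (W : Submodule K V) :
    BddBelow (Set.range fun w : {w : V // w ∈ W ∧ w ≠ 0} => Real.log (N' w) - Real.log (N w)) :=
  ⟨-B, by rintro _ ⟨w, rfl⟩; exact (abs_le.1 (hB w w.2.2)).1⟩

lemma bddAbove_range_iInf_log_sub_log (hB0 : 0 ≤ B)
    (hB : ∀ v ≠ 0, |Real.log (N' v) - Real.log (N v)| ≤ B) :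
    BddAbove (Set.range fun W : {W : Submodule K V // i ≤ Module.finrank K W} =>
      ⨅ w : {w : V // w ∈ W.1 ∧ w ≠ 0}, (Real.log (N' w) - Real.log (N w))) :=
  ⟨B, by
    rintro _ ⟨W, rfl⟩
    exact (abs_le.1 (abs_iInf_le hB0 fun w : {w : V // w ∈ W.1 ∧ w ≠ 0} => hB w w.2.2)).2⟩

lemma le_specVal (hB0 : 0 ≤ B) (hB : ∀ v ≠ 0, |Real.log (N' v) - Real.log (N v)| ≤ B)
    {W : Submodule K V} (hi : 0 < i) (hW : i ≤ Module.finrank K W)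
    (h : ∀ w ∈ W, w ≠ 0 → c ≤ Real.log (N' w) - Real.log (N w)) : c ≤ specVal K N N' i := by
  rw [specVal_eq_iSup_iInf]
  obtain ⟨w, hw, hw0⟩ := W.exists_mem_ne_zero_of_ne_bot fun hbot => by
    rw [hbot, finrank_bot] at hW
    omega
  have : Nonempty {w : V // w ∈ W ∧ w ≠ 0} := ⟨⟨w, hw, hw0⟩⟩
  exact le_ciSup_of_le (bddAbove_range_iInf_log_sub_log hB0 hB) ⟨W, hW⟩
    (le_ciInf fun w => h w w.2.1 w.2.2)

lemma specVal_le (hB : ∀ v ≠ 0, |Real.log (N' v) - Real.log (N v)| ≤ B)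
    (hi : i ≤ Module.finrank K V)
    (h : ∀ W : Submodule K V, i ≤ Module.finrank K W →
      ∃ w ∈ W, w ≠ 0 ∧ Real.log (N' w) - Real.log (N w) ≤ c) : specVal K N N' i ≤ c := by
  rw [specVal_eq_iSup_iInf]
  have : Nonempty {W : Submodule K V // i ≤ Module.finrank K W} := ⟨⟨⊤, by rwa [finrank_top]⟩⟩
  refine ciSup_le fun W => ?_
  obtain ⟨w, hw, hw0, hwc⟩ := h W W.2
  exact ciInf_le_of_le (bddBelow_range_log_sub_log hB W.1) ⟨w, hw, hw0⟩ hwc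

lemma abs_specVal_sub_specVal_le {ε : ℝ} (hε : 0 ≤ ε) (hB0 : 0 ≤ B)
    (hB : ∀ v ≠ 0, |Real.log (M' v) - Real.log (M v)| ≤ B)
    (h : ∀ v ≠ 0, |(Real.log (N' v) - Real.log (N v)) - (Real.log (M' v) - Real.log (M v))| ≤ ε)
    (i : ℕ) : |specVal K N N' i - specVal K M M' i| ≤ ε := by
  simp only [specVal_eq_iSup_iInf]
  exact abs_iSup_sub_iSup_le hε (bddAbove_range_iInf_log_sub_log hB0 hB) fun W =>
    abs_iInf_sub_iInf_le hε (bddBelow_range_log_sub_log hB W.1) fun w => h w w.2.2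

end Spectral

lemma finrank_basis_flag {K V : Type*} [Field K] [AddCommGroup V] [Module K V] {d : ℕ}
    (b : Module.Basis (Fin d) K V) (i : Fin d) : Module.finrank K (b.flag i.succ) = i + 1 := by
  have hli : LinearIndependent K fun j : Set.Iic i => b j :=
    b.linearIndependent.comp _ Subtype.val_injective
  have hcard := finrank_span_eq_card hli
  have hset : {j : Fin d | j.castSucc < i.succ} = Set.Iic i := by
    ext j
    simp [Fin.castSucc_lt_succ_iff]
  rw [Module.Basis.flag, hset, Set.image_eq_range, hcard]
  simp

lemma exists_mem_ne_zero_repr_eq_zero {K V : Type*} [Field K] [AddCommGroup V] [Module K V] {d : ℕ}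
    (b : Module.Basis (Fin d) K V) (i : Fin d) {W : Submodule K V}
    (hW : i + 1 ≤ Module.finrank K W) : ∃ w ∈ W, w ≠ 0 ∧ ∀ j < i, b.repr w j = 0 := by
  have := Module.Finite.of_basis b
  let coords : W →ₗ[K] Set.Iio i → K := LinearMap.pi fun j => b.coord j ∘ₗ W.subtype
  have hker : LinearMap.ker coords ≠ ⊥ := LinearMap.ker_ne_bot_of_finrank_lt (by simpa using hW)
  obtain ⟨w, hw, hw0⟩ := (LinearMap.ker coords).exists_mem_ne_zero_of_ne_bot hker
  exact ⟨w, w.2, by simpa using hw0, fun j hj => congrFun hw ⟨j, hj⟩⟩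

section SpecValDiagNorm

variable {K V : Type*} [NormedField K] [AddCommGroup V] [Module K V] {d : ℕ}
  {b : Module.Basis (Fin d) K V} {r r' : Fin d → ℝ}

lemma specVal_diagNorm (hr : ∀ j, 0 < r j) (hr' : ∀ j, 0 < r' j)
    (hanti : Antitone fun j => Real.log (r' j) - Real.log (r j)) (i : Fin d) :
    specVal K (diagNorm b r) (diagNorm b r') (i + 1) = Real.log (r' i) - Real.log (r i) := by
  obtain ⟨B, hB0, hB⟩ := exists_abs_log_diagNorm_sub_log_diagNorm_le b hr hr'
  refine le_antisymm (specVal_le hB ?_ fun W hW => ?_)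
    (le_specVal hB0 hB i.succ_pos (finrank_basis_flag b i).ge fun w hw hw0 => ?_)
  · rw [Module.finrank_eq_card_basis b, Fintype.card_fin]
    exact i.2
  · obtain ⟨w, hw, hw0, hcoord⟩ := exists_mem_ne_zero_repr_eq_zero b i hW
    exact ⟨w, hw, hw0, log_diagNorm_sub_log_diagNorm_le hr hr' hw0 fun j hj =>
      hanti (not_lt.1 (mt (hcoord j) hj))⟩
  · refine le_log_diagNorm_sub_log_diagNorm hr hr' hw0 fun j hj => hanti (not_lt.1 fun hij => hj ?_)
    exact b.flag_le_ker_coord (Fin.succ_le_castSucc_iff.2 hij) hw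

lemma abs_specVal_sub_le_of_mem_Icc_diagNorm {N N' : V → ℝ} {t : ℝ} (ht : 0 < t) (ht1 : t ≤ 1)
    (hr : ∀ j, 0 < r j) (hr' : ∀ j, 0 < r' j)
    (hanti : Antitone fun j => Real.log (r' j) - Real.log (r j))
    (hN : ∀ v, N v ∈ Set.Icc (t * diagNorm b r v) (diagNorm b r v))
    (hN' : ∀ v, N' v ∈ Set.Icc (t * diagNorm b r' v) (diagNorm b r' v)) (i : Fin d) :
    |specVal K N N' (i + 1) - (Real.log (r' i) - Real.log (r i))| ≤ -Real.log t := by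
  have hlog {x y : ℝ} (hy : 0 < y) (hx : x ∈ Set.Icc (t * y) y) :
      Real.log x ∈ Set.Icc (Real.log t + Real.log y) (Real.log y) := by
    rw [← Real.log_mul ht.ne' hy.ne']
    exact ⟨Real.log_le_log (mul_pos ht hy) hx.1,
      Real.log_le_log ((mul_pos ht hy).trans_le hx.1) hx.2⟩
  obtain ⟨B, hB0, hB⟩ := exists_abs_log_diagNorm_sub_log_diagNorm_le b hr hr'
  rw [← specVal_diagNorm (b := b) hr hr' hanti i]
  refine abs_specVal_sub_specVal_le (neg_nonneg.2 (Real.log_nonpos ht.le ht1)) hB0 hB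
    (fun v hv => ?_) _
  obtain ⟨hlow, hup⟩ := hlog (diagNorm_pos hr hv) (hN v)
  obtain ⟨hlow', hup'⟩ := hlog (diagNorm_pos hr' hv) (hN' v)
  exact abs_le.2 ⟨by linarith, by linarith⟩

end SpecValDiagNorm

section GroundFieldExt

variable {K L V : Type*} [NormedField K] [NormedField L] [Algebra K L] [AddCommGroup V]
  [Module K V] {N M : V → ℝ}

lemma groundFieldExt_sum_tmul_le {ι : Type*} [Fintype ι] (hN : ∀ v, 0 ≤ N v) (a : ι → L)
    (v : ι → V) {c : ℝ} (hc : 0 ≤ c) (h : ∀ i, ‖a i‖ * N (v i) ≤ c) :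
    groundFieldExt K N (∑ i, a i ⊗ₜ[K] v i) ≤ c := by
  let e := Fintype.equivFin ι
  refine csInf_le_of_le ⟨0, ?_⟩ ⟨Fintype.card ι, Fin.cons 0 (a ∘ e.symm),
    Fin.cons 0 (v ∘ e.symm), ?_, rfl⟩ (Finset.sup'_le _ _ fun j _ => ?_)
  · rintro _ ⟨n, a, v, -, rfl⟩
    exact (mul_nonneg (norm_nonneg (a 0)) (hN (v 0))).trans
      (Finset.le_sup' (fun j => ‖a j‖ * N (v j)) (Finset.mem_univ 0))
  · simp [Fin.sum_univ_succ, Equiv.sum_comp e.symm fun i => a i ⊗ₜ[K] v i]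
  · cases j using Fin.cases with
    | zero => simpa using hc
    | succ j => simpa using h (e.symm j)

lemma le_groundFieldExt {w : L ⊗[K] V} {c : ℝ}
    (h : ∀ (n : ℕ) (a : Fin (n + 1) → L) (v : Fin (n + 1) → V), w = ∑ j, a j ⊗ₜ[K] v j →
      ∀ m, (∀ j, ‖a j‖ * N (v j) ≤ m) → c ≤ m) : c ≤ groundFieldExt K N w := by
  refine le_csInf ?_ ?_
  · obtain ⟨n, a, v, rfl⟩ := TensorProduct.exists_sum_tmul_eq w
    exact ⟨_, n, Fin.cons 0 a, Fin.cons 0 v, by simp [Fin.sum_univ_succ], rfl⟩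
  · rintro _ ⟨n, a, v, hw, rfl⟩
    exact h n a v hw _ fun j => Finset.le_sup' (fun j => ‖a j‖ * N (v j)) (Finset.mem_univ j)

lemma mul_groundFieldExt_le {t : ℝ} (ht : 0 < t) (hN : ∀ v, 0 ≤ N v) (h : ∀ v, t * N v ≤ M v)
    (w : L ⊗[K] V) : t * groundFieldExt K N w ≤ groundFieldExt K M w := by
  refine le_groundFieldExt fun n a v hw m hm => ?_
  have hterm (j) : t * (‖a j‖ * N (v j)) ≤ m :=
    calc t * (‖a j‖ * N (v j)) = ‖a j‖ * (t * N (v j)) := mul_left_comm ..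
      _ ≤ ‖a j‖ * M (v j) := by gcongr; exact h _
      _ ≤ m := hm j
  have hm0 : 0 ≤ m :=
    (mul_nonneg ht.le (mul_nonneg (norm_nonneg (a 0)) (hN (v 0)))).trans (hterm 0)
  rw [hw, ← le_div_iff₀' ht]
  exact groundFieldExt_sum_tmul_le hN a v (div_nonneg hm0 ht.le) fun j =>
    (le_div_iff₀' ht).2 (hterm j)

lemma groundFieldExt_diagNorm [IsUltrametricDist L] (hisom : ∀ x : K, ‖algebraMap K L x‖ = ‖x‖)
    {ι : Type*} [Finite ι] {b : Module.Basis ι K V} {r : ι → ℝ} (hr : ∀ j, 0 ≤ r j)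
    (w : L ⊗[K] V) : groundFieldExt K (diagNorm b r) w = diagNorm (b.baseChange L) r w := by
  have := Fintype.ofFinite ι
  have hnonneg := diagNorm_nonneg (b := b) hr
  refine le_antisymm ?_ (le_groundFieldExt fun n a v hw m hm => diagNorm_le (fun j => ?_) ?_)
  · have hw : w = ∑ j, (b.baseChange L).repr w j ⊗ₜ[K] b j := by
      conv_lhs => rw [← (b.baseChange L).sum_repr w]
      simp [Module.Basis.baseChange_apply, TensorProduct.smul_tmul']
    conv_lhs => rw [hw]
    refine groundFieldExt_sum_tmul_le hnonneg _ _ (diagNorm_nonneg hr w) fun j => ?_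
    rw [diagNorm_apply_basis hr]
    exact norm_repr_mul_le_diagNorm (b.baseChange L) r w j
  · obtain ⟨k, -, hk⟩ := IsUltrametricDist.exists_norm_finsetSum_le_of_nonempty
      Finset.univ_nonempty fun k => (b.baseChange L).repr (a k ⊗ₜ[K] v k) j
    calc ‖(b.baseChange L).repr w j‖ * r j
        ≤ ‖(b.baseChange L).repr (a k ⊗ₜ[K] v k) j‖ * r j := by
          rw [hw, map_sum, Finsupp.finsetSum_apply]
          exact mul_le_mul_of_nonneg_right hk (hr j)
      _ = ‖a k‖ * (‖b.repr (v k) j‖ * r j) := by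
          rw [Module.Basis.baseChange_repr_tmul, Algebra.smul_def, norm_mul, hisom]
          ring
      _ ≤ ‖a k‖ * diagNorm b r (v k) := by
          gcongr
          exact norm_repr_mul_le_diagNorm b r (v k) j
      _ ≤ m := hm k
  · exact (mul_nonneg (norm_nonneg (a 0)) (hnonneg (v 0))).trans (hm 0)

lemma groundFieldExt_mem_Icc_diagNorm [IsUltrametricDist L]
    (hisom : ∀ x : K, ‖algebraMap K L x‖ = ‖x‖) {ι : Type*} [Finite ι] {b : Module.Basis ι K V}
    {r : ι → ℝ} (hr : ∀ j, 0 ≤ r j) {t : ℝ} (ht : 0 < t) (hN : ∀ v, 0 ≤ N v)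
    (h : ∀ v, N v ∈ Set.Icc (t * diagNorm b r v) (diagNorm b r v)) (w : L ⊗[K] V) :
    groundFieldExt K N w ∈
      Set.Icc (t * diagNorm (b.baseChange L) r w) (diagNorm (b.baseChange L) r w) := by
  rw [← groundFieldExt_diagNorm hisom hr]
  refine ⟨mul_groundFieldExt_le ht (diagNorm_nonneg hr) (fun v => (h v).1) w, ?_⟩
  simpa using mul_groundFieldExt_le one_pos hN (fun v => by simpa using (h v).2) w

variable [CompleteSpace K] [FiniteDimensional K V] [IsUltrametricDist L] {N' : V → ℝ}

lemma specVal_groundFieldExt (hisom : ∀ x : K, ‖algebraMap K L x‖ = ‖x‖) (hN : IsNAnorm K N)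
    (hN' : IsNAnorm K N') (i : Fin (Module.finrank K V)) :
    specVal L (groundFieldExt K N : L ⊗[K] V → ℝ) (groundFieldExt K N') (i + 1) =
      specVal K N N' (i + 1) := by
  refine eq_of_forall_dist_le fun ε hε => ?_
  set t := Real.exp (-(ε / 2)) with ht_def
  have ht : 0 < t := Real.exp_pos _
  have ht1 : t < 1 := Real.exp_lt_one_iff.2 (by linarith)
  obtain ⟨b, ho, ho', hanti⟩ := hN.exists_basis_isTOrthogonal_antitone hN' ht ht1
  have hpos (j) : 0 < N (b j) := hN.pos (b.ne_zero j)
  have hpos' (j) : 0 < N' (b j) := hN'.pos (b.ne_zero j)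
  have hIcc (v : V) : N v ∈ Set.Icc (t * diagNorm b (N ∘ b) v) (diagNorm b (N ∘ b) v) :=
    ⟨ho.mul_diagNorm_le hN ht.le v, hN.le_diagNorm b v⟩
  have hIcc' (v : V) : N' v ∈ Set.Icc (t * diagNorm b (N' ∘ b) v) (diagNorm b (N' ∘ b) v) :=
    ⟨ho'.mul_diagNorm_le hN' ht.le v, hN'.le_diagNorm b v⟩
  have hK := abs_specVal_sub_le_of_mem_Icc_diagNorm ht ht1.le hpos hpos' hanti hIcc hIcc' i
  have hL := abs_specVal_sub_le_of_mem_Icc_diagNorm ht ht1.le hpos hpos' hanti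
    (groundFieldExt_mem_Icc_diagNorm (L := L) hisom (fun j => (hpos j).le) ht hN.nonneg hIcc)
    (groundFieldExt_mem_Icc_diagNorm (L := L) hisom (fun j => (hpos' j).le) ht hN'.nonneg hIcc') i
  rw [ht_def, Real.log_exp, neg_neg, ← Real.dist_eq] at hK hL
  exact (dist_triangle_right _ _ _).trans (by linarith)

end GroundFieldExt

theorem relVol_groundFieldExt_general (K L V : Type*) [NormedField K] [CompleteSpace K]
    [NormedField L] [IsUltrametricDist L] [Algebra K L]
    (hisom : ∀ x : K, ‖algebraMap K L x‖ = ‖x‖)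
    [AddCommGroup V] [Module K V] [FiniteDimensional K V]
    (N N' : V → ℝ) (hN : IsNAnorm K N) (hN' : IsNAnorm K N') :
    relVol L (L ⊗[K] V) (groundFieldExt K N) (groundFieldExt K N') = relVol K V N N' := by
  simp only [relVol, Module.finrank_baseChange, Finset.sum_range,
    specVal_groundFieldExt hisom hN hN']

/-- The relative volume is invariant under ground field extension:
`vol(N_L, N'_L) = vol(N, N')`. -/
theorem relVol_groundFieldExt
    (K L V : Type*) [NormedField K] [IsUltrametricDist K] [CompleteSpace K]
    [NormedField L] [IsUltrametricDist L] [CompleteSpace L] [Algebra K L]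
    (hisom : ∀ x : K, ‖algebraMap K L x‖ = ‖x‖)
    [AddCommGroup V] [Module K V] [FiniteDimensional K V]
    (N N' : V → ℝ) (hN : IsNAnorm K N) (hN' : IsNAnorm K N') :
    relVol L (L ⊗[K] V) (groundFieldExt K N) (groundFieldExt K N') = relVol K V N N' :=
  relVol_groundFieldExt_general K L V hisom N N' hN hN'
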